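/- Let E be a real inner product space and let n be a positive integer. Let Φ : E → (Fin n → ℝ) be a map whose output always has all coordinates in [0,1]. Let f, g : (Fin n → ℝ) → ℝ both be entry-wise concave on the unit cube, with f(X) ≥ 0 for every binary vector X ∈ {0,1}ⁿ, and with g(X) = 0 or g(X) ≥ 1 for every binary vector X ∈ {0,1}ⁿ. Let β > 0 and define the loss ℓ : E → ℝ by ℓ(θ) = f(Φ(θ)) + β·g(Φ(θ)). Fix θ ∈ E, let L > 0 with 0 < α < 2/L, and suppose ℓ is differentiable with base-point L-Lipschitz gradient on the closed ball of radius α·‖∇ℓ(θ)‖ around θ. Set Δ = (α − Lα²/2)·‖∇ℓ(θ)‖². If ℓ(θ) < β + Δ, then there exists a binary vector X ∈ {0,1}ⁿ with g(X) = 0 and f(X) ≤ ℓ(θ) − Δ. -/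

import Mathlib

/-- `F` is entry-wise concave on the unit cube: for every index `i` and every point `x`
with all coordinates in `[0,1]`, the map `t ↦ F (Function.update x i t)` is concave
on `[0,1]`. -/
def EntrywiseConcave (n : ℕ) (F : (Fin n → ℝ) → ℝ) : Prop :=
  ∀ (i : Fin n) (x : Fin n → ℝ), (∀ j, x j ∈ Set.Icc (0 : ℝ) 1) →
    ConcaveOn ℝ (Set.Icc (0 : ℝ) 1) (fun t => F (Function.update x i t))

/-!
One gradient step decreases the loss `ℓ` by at least `Δ`, by the quadratic upper bound for functions
with Lipschitz gradient, so the soft output `x = Φ (θ - α • ∇ℓ θ)` has penalized cost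
`f x + β * g x < β`. The penalized cost is again entry-wise concave, and a concave function on an
interval is minimized at an endpoint, so rounding the coordinates of `x` one at a time to the
cheaper of `0` and `1` never increases it. The resulting binary vector costs less than `β`; as
`f ≥ 0` on binary vectors, a violated constraint `g ≥ 1` would alone cost `β`. Hence `g = 0` there
and the penalized cost is `f`.
-/

section Rounding

variable {𝕜 γ : Type*} [Field 𝕜] [LinearOrder 𝕜] [IsStrictOrderedRing 𝕜] [LinearOrder γ]

theorem exists_endpoint_le_of_quasiconcaveOn {a b z : 𝕜} {φ : 𝕜 → γ}
    (hφ : QuasiconcaveOn 𝕜 (Set.Icc a b) φ) (hz : z ∈ Set.Icc a b) :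
    ∃ t, (t = a ∨ t = b) ∧ φ t ≤ φ z := by
  have hab : a ≤ b := hz.1.trans hz.2
  have hmin : min (φ a) (φ b) ≤ φ z :=
    ((hφ (min (φ a) (φ b))).ordConnected.out ⟨Set.left_mem_Icc.2 hab, min_le_left _ _⟩
      ⟨Set.right_mem_Icc.2 hab, min_le_right _ _⟩ hz).2
  rcases min_le_iff.1 hmin with ha | hb
  · exact ⟨a, .inl rfl, ha⟩
  · exact ⟨b, .inr rfl, hb⟩

variable {ι : Type*} [DecidableEq ι] {a b x : ι → 𝕜} {F : (ι → 𝕜) → γ}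

theorem exists_mem_Icc_forall_mem_endpoint_le_of_quasiconcaveOn_update
    (hF : ∀ i, ∀ y ∈ Set.Icc a b,
      QuasiconcaveOn 𝕜 (Set.Icc (a i) (b i)) fun t => F (Function.update y i t))
    (hx : x ∈ Set.Icc a b) (s : Finset ι) :
    ∃ X ∈ Set.Icc a b, (∀ i ∈ s, X i = a i ∨ X i = b i) ∧ F X ≤ F x := by
  induction s using Finset.induction_on with
  | empty => exact ⟨x, hx, by simp, le_rfl⟩
  | insert i s _ ih =>
    obtain ⟨X, hX, hXs, hXx⟩ := ih
    obtain ⟨t, ht, htX⟩ := exists_endpoint_le_of_quasiconcaveOn (hF i X hX) ⟨hX.1 i, hX.2 i⟩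
    rw [Function.update_eq_self] at htX
    have hab : a i ≤ b i := (hX.1 i).trans (hX.2 i)
    have ht_mem : t ∈ Set.Icc (a i) (b i) := by
      rcases ht with rfl | rfl
      exacts [Set.left_mem_Icc.2 hab, Set.right_mem_Icc.2 hab]
    refine ⟨Function.update X i t, ⟨?_, ?_⟩, fun j hj => ?_, htX.trans hXx⟩
    · exact le_update_iff.2 ⟨ht_mem.1, fun j _ => hX.1 j⟩
    · exact update_le_iff.2 ⟨ht_mem.2, fun j _ => hX.2 j⟩
    · obtain rfl | hji := eq_or_ne j i
      · rwa [Function.update_self]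
      · rw [Function.update_of_ne hji]
        exact hXs j (Finset.mem_of_mem_insert_of_ne hj hji)

theorem exists_vertex_le_of_quasiconcaveOn_update [Finite ι]
    (hF : ∀ i, ∀ y ∈ Set.Icc a b,
      QuasiconcaveOn 𝕜 (Set.Icc (a i) (b i)) fun t => F (Function.update y i t))
    (hx : x ∈ Set.Icc a b) :
    ∃ X : ι → 𝕜, (∀ i, X i = a i ∨ X i = b i) ∧ F X ≤ F x := by
  have := Fintype.ofFinite ι
  obtain ⟨X, -, hX, hXx⟩ :=
    exists_mem_Icc_forall_mem_endpoint_le_of_quasiconcaveOn_update hF hx Finset.univ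
  exact ⟨X, fun i => hX i (Finset.mem_univ i), hXx⟩

end Rounding

namespace EntrywiseConcave

variable {n : ℕ} {f g : (Fin n → ℝ) → ℝ} {x : Fin n → ℝ} {β : ℝ}

theorem add (hf : EntrywiseConcave n f) (hg : EntrywiseConcave n g) :
    EntrywiseConcave n fun x => f x + g x :=
  fun i x hx => (hf i x hx).add (hg i x hx)

theorem const_mul (hg : EntrywiseConcave n g) (hβ : 0 ≤ β) :
    EntrywiseConcave n fun x => β * g x :=
  fun i x hx => (hg i x hx).smul hβ

theorem exists_binary_le (hf : EntrywiseConcave n f) (hx : ∀ i, x i ∈ Set.Icc (0 : ℝ) 1) :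
    ∃ X : Fin n → ℝ, (∀ i, X i = 0 ∨ X i = 1) ∧ f X ≤ f x :=
  exists_vertex_le_of_quasiconcaveOn_update (a := 0) (b := 1)
    (fun i y hy => (hf i y fun j => ⟨hy.1 j, hy.2 j⟩).quasiconcaveOn)
    ⟨fun i => (hx i).1, fun i => (hx i).2⟩

theorem exists_feasible_binary_le (hf : EntrywiseConcave n f) (hg : EntrywiseConcave n g)
    (hf0 : ∀ X : Fin n → ℝ, (∀ i, X i = 0 ∨ X i = 1) → 0 ≤ f X)
    (hg01 : ∀ X : Fin n → ℝ, (∀ i, X i = 0 ∨ X i = 1) → g X = 0 ∨ 1 ≤ g X)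
    (hβ : 0 ≤ β) (hx : ∀ i, x i ∈ Set.Icc (0 : ℝ) 1) (hlt : f x + β * g x < β) :
    ∃ X : Fin n → ℝ, (∀ i, X i = 0 ∨ X i = 1) ∧ g X = 0 ∧ f X ≤ f x + β * g x := by
  obtain ⟨X, hX, hXx⟩ := (hf.add (hg.const_mul hβ)).exists_binary_le hx
  rcases hg01 X hX with hfeasible | hviolated
  · exact ⟨X, hX, hfeasible, by simpa [hfeasible] using hXx⟩
  · have hpenalty : β ≤ β * g X := le_mul_of_one_le_right hβ hviolated
    linarith [hf0 X hX]

end EntrywiseConcave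

section Descent

theorem le_quadratic_of_hasDerivWithinAt_le_linear {φ φ' : ℝ → ℝ} {a b c K : ℝ} (hab : a ≤ b)
    (hφ : ∀ t ∈ Set.Icc a b, HasDerivWithinAt φ (φ' t) (Set.Icc a b) t)
    (hle : ∀ t ∈ Set.Ico a b, φ' t ≤ c + K * (t - a)) :
    φ b ≤ φ a + c * (b - a) + K / 2 * (b - a) ^ 2 := by
  have hquad (t : ℝ) : HasDerivAt (fun t => φ a + c * (t - a) + K / 2 * (t - a) ^ 2)
      (c + K * (t - a)) t := by
    have hsub : HasDerivAt (fun t => t - a) 1 t := (hasDerivAt_id t).sub_const a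
    exact (((hsub.const_mul c).const_add (φ a)).add ((hsub.pow 2).const_mul (K / 2))).congr_deriv
      (by push_cast; ring)
  exact image_le_of_deriv_right_le_deriv_boundary
    (fun t ht => (hφ t ht).continuousWithinAt)
    (fun t ht => (hφ t (Set.Ico_subset_Icc_self ht)).mono_of_mem_nhdsWithin
      (Icc_mem_nhdsGE_of_mem ht))
    (by simp) (fun t _ => (hquad t).continuousAt.continuousWithinAt)
    (fun t _ => (hquad t).hasDerivWithinAt) hle (Set.right_mem_Icc.2 hab)

theorem le_quadratic_of_hasFDerivWithinAt_of_lipschitz_at {E : Type*} [NormedAddCommGroup E]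
    [NormedSpace ℝ E] {f : E → ℝ} {f' : E → E →L[ℝ] ℝ} {s : Set E} {x y : E} {L : ℝ}
    (hs : Convex ℝ s) (hx : x ∈ s) (hy : y ∈ s)
    (hf : ∀ z ∈ s, HasFDerivWithinAt f (f' z) s z)
    (hlip : ∀ z ∈ s, ‖f' z - f' x‖ ≤ L * ‖z - x‖) :
    f y ≤ f x + f' x (y - x) + L / 2 * ‖y - x‖ ^ 2 := by
  let p : ℝ →ᵃ[ℝ] E := AffineMap.lineMap x y
  have hp : Set.MapsTo p (Set.Icc 0 1) s := hs.mapsTo_lineMap hx hy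
  have hderiv (t : ℝ) (ht : t ∈ Set.Icc (0 : ℝ) 1) :
      HasDerivWithinAt (f ∘ p) (f' (p t) (y - x)) (Set.Icc 0 1) t :=
    (hf _ (hp ht)).comp_hasDerivWithinAt t AffineMap.hasDerivWithinAt_lineMap hp
  have hbound (t : ℝ) (ht : t ∈ Set.Ico (0 : ℝ) 1) :
      f' (p t) (y - x) ≤ f' x (y - x) + L * ‖y - x‖ ^ 2 * (t - 0) := by
    have hpx : ‖p t - x‖ = t * ‖y - x‖ := by
      simp [p, AffineMap.lineMap_apply_module', norm_smul, abs_of_nonneg ht.1]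
    rw [← sub_le_iff_le_add', ← sub_apply]
    calc (f' (p t) - f' x) (y - x)
        ≤ ‖f' (p t) - f' x‖ * ‖y - x‖ :=
          (Real.le_norm_self _).trans ((f' (p t) - f' x).le_opNorm _)
      _ ≤ L * ‖p t - x‖ * ‖y - x‖ := by gcongr; exact hlip _ (hp (Set.Ico_subset_Icc_self ht))
      _ = L * ‖y - x‖ ^ 2 * (t - 0) := by rw [hpx]; ring
  have hle := le_quadratic_of_hasDerivWithinAt_le_linear zero_le_one hderiv hbound
  simp only [Function.comp_apply, p, AffineMap.lineMap_apply_zero, AffineMap.lineMap_apply_one]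
    at hle
  linarith

variable {E : Type*} [NormedAddCommGroup E] [InnerProductSpace ℝ E]

-- `G` is the gradient of `f`, written with `innerSL` as `HasGradientAt` presupposes completeness.
theorem gradient_step_le {f : E → ℝ} {G : E → E} {s : Set E} {x : E} {L α : ℝ}
    (hs : Convex ℝ s) (hx : x ∈ s) (hstep : x - α • G x ∈ s)
    (hf : ∀ z ∈ s, HasFDerivWithinAt f (innerSL ℝ (G z)) s z)
    (hlip : ∀ z ∈ s, ‖G z - G x‖ ≤ L * ‖z - x‖) :
    f (x - α • G x) ≤ f x - (α - L * α ^ 2 / 2) * ‖G x‖ ^ 2 := by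
  have hlip' (z : E) (hz : z ∈ s) : ‖innerSL ℝ (G z) - innerSL ℝ (G x)‖ ≤ L * ‖z - x‖ := by
    rw [← map_sub, innerSL_apply_norm]
    exact hlip z hz
  calc f (x - α • G x)
      ≤ f x + inner ℝ (G x) (x - α • G x - x) + L / 2 * ‖x - α • G x - x‖ ^ 2 :=
        le_quadratic_of_hasFDerivWithinAt_of_lipschitz_at hs hx hstep hf hlip'
    _ = f x - (α - L * α ^ 2 / 2) * ‖G x‖ ^ 2 := by
        rw [sub_sub_cancel_left, inner_neg_right, real_inner_smul_right,
          real_inner_self_eq_norm_sq, norm_neg, norm_smul, mul_pow, Real.norm_eq_abs, sq_abs]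
        ring

end Descent

theorem performance_guarantee_8_general
    {E : Type*} [NormedAddCommGroup E] [InnerProductSpace ℝ E] {n : ℕ} {Φ : E → Fin n → ℝ}
    (hΦ : ∀ (θ : E) (i : Fin n), Φ θ i ∈ Set.Icc (0 : ℝ) 1)
    {f g : (Fin n → ℝ) → ℝ} (hf : EntrywiseConcave n f) (hg : EntrywiseConcave n g)
    (hf0 : ∀ X : Fin n → ℝ, (∀ i, X i = 0 ∨ X i = 1) → 0 ≤ f X)
    (hg01 : ∀ X : Fin n → ℝ, (∀ i, X i = 0 ∨ X i = 1) → g X = 0 ∨ 1 ≤ g X)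
    {β : ℝ} (hβ : 0 ≤ β) {ℓ : E → ℝ} (hℓ : ∀ θ, ℓ θ = f (Φ θ) + β * g (Φ θ))
    {G : E → E} {θ : E} {L α : ℝ} (hα : 0 ≤ α)
    (hdiff : ∀ θ' : E, ‖θ' - θ‖ ≤ α * ‖G θ‖ → HasFDerivAt ℓ (innerSL ℝ (G θ')) θ')
    (hlip : ∀ θ' : E, ‖θ' - θ‖ ≤ α * ‖G θ‖ → ‖G θ' - G θ‖ ≤ L * ‖θ' - θ‖)
    {Δ : ℝ} (hΔ : Δ = (α - L * α ^ 2 / 2) * ‖G θ‖ ^ 2) (hloss : ℓ θ < β + Δ) :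
    ∃ X : Fin n → ℝ, (∀ i, X i = 0 ∨ X i = 1) ∧ g X = 0 ∧ f X ≤ ℓ θ - Δ := by
  have hball : θ - α • G θ ∈ Metric.closedBall θ (α * ‖G θ‖) := by
    simp [norm_smul, abs_of_nonneg hα]
  have hdescent : ℓ (θ - α • G θ) ≤ ℓ θ - Δ := hΔ ▸
    gradient_step_le (convex_closedBall θ _) (Metric.mem_closedBall_self (by positivity)) hball
      (fun z hz => (hdiff z (mem_closedBall_iff_norm.1 hz)).hasFDerivWithinAt)
      (fun z hz => hlip z (mem_closedBall_iff_norm.1 hz))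
  have hsoft : ℓ (θ - α • G θ) < β := by linarith
  rw [hℓ] at hdescent hsoft
  obtain ⟨X, hX, hgX, hfX⟩ := hf.exists_feasible_binary_le hg hf0 hg01 hβ (hΦ _) hsoft
  exact ⟨X, hX, hgX, hfX.trans hdescent⟩

theorem performance_guarantee_8
    {E : Type*} [NormedAddCommGroup E] [InnerProductSpace ℝ E] [CompleteSpace E]
    (n : ℕ) (hn : 0 < n) (Φ : E → Fin n → ℝ)
    (hΦ : ∀ (θ : E) (i : Fin n), Φ θ i ∈ Set.Icc (0 : ℝ) 1)
    (f g : (Fin n → ℝ) → ℝ)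
    (hf : EntrywiseConcave n f) (hg : EntrywiseConcave n g)
    (hf0 : ∀ X : Fin n → ℝ, (∀ i, X i = 0 ∨ X i = 1) → 0 ≤ f X)
    (hg01 : ∀ X : Fin n → ℝ, (∀ i, X i = 0 ∨ X i = 1) → g X = 0 ∨ 1 ≤ g X)
    (β : ℝ) (hβ : 0 < β)
    (ℓ : E → ℝ) (hℓ : ∀ θ, ℓ θ = f (Φ θ) + β * g (Φ θ))
    (θ : E) (L α : ℝ) (hL : 0 < L) (hα : 0 < α) (hα2 : α < 2 / L)
    (hdiff : ∀ θ' : E, ‖θ' - θ‖ ≤ α * ‖gradient ℓ θ‖ → DifferentiableAt ℝ ℓ θ')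
    (hlip : ∀ θ' : E, ‖θ' - θ‖ ≤ α * ‖gradient ℓ θ‖ →
      ‖gradient ℓ θ' - gradient ℓ θ‖ ≤ L * ‖θ' - θ‖)
    (Δ : ℝ) (hΔ : Δ = (α - L * α ^ 2 / 2) * ‖gradient ℓ θ‖ ^ 2)
    (hloss : ℓ θ < β + Δ) :
    ∃ X : Fin n → ℝ, (∀ i, X i = 0 ∨ X i = 1) ∧ g X = 0 ∧ f X ≤ ℓ θ - Δ :=
  performance_guarantee_8_general hΦ hf hg hf0 hg01 hβ.le hℓ hα.le
    (fun θ' hθ' => (hdiff θ' hθ').hasGradientAt.hasFDerivAt) hlip hΔ hloss
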